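/- arXiv:2504.00411 — 3 statements merged into one kernel-verified Lean document; each statement's English description precedes it below -/
import Mathlib

section
/- Let z ∼ N(0, σ²I_d) and let L : ℝ^d → ℝ be smooth with L(v) = L₀ ≠ 0 at a fixed point v. Then the covariance matrix of the likelihood ratio proxy ĝ = (1/σ²)·z·L(v+z) satisfies Var(ĝ) = (L₀²/σ²)·I + O(1) as σ → 0; i.e., σ²·Var(ĝ) → L₀²·I as σ ↓ 0. -/
open MeasureTheory Real Filter Asymptotics

/-- Density of `N(0, σ²I_d)` on `ℝ^d`. -/
noncomputable def gaussDensity (d : ℕ) (σ : ℝ) (x : EuclideanSpace ℝ (Fin d)) : ℝ :=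
  (2 * Real.pi * σ ^ 2) ^ (-(d : ℝ) / 2) * Real.exp (-‖x‖ ^ 2 / (2 * σ ^ 2))

/-- Mean of the likelihood ratio proxy `ĝ = (1/σ²)·z·L(v+z)`, componentwise. -/
noncomputable def lrMean {d : ℕ} (L : EuclideanSpace ℝ (Fin d) → ℝ)
    (v : EuclideanSpace ℝ (Fin d)) (σ : ℝ) (i : Fin d) : ℝ :=
  ∫ z, gaussDensity d σ z * ((σ ^ 2)⁻¹ * L (v + z) * z i)

/-- Covariance matrix entries of the likelihood ratio proxy `ĝ = (1/σ²)·z·L(v+z)`. -/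
noncomputable def lrCov {d : ℕ} (L : EuclideanSpace ℝ (Fin d) → ℝ)
    (v : EuclideanSpace ℝ (Fin d)) (σ : ℝ) (i j : Fin d) : ℝ :=
  ∫ z, gaussDensity d σ z *
    (((σ ^ 2)⁻¹ * L (v + z) * z i - lrMean L v σ i) *
      ((σ ^ 2)⁻¹ * L (v + z) * z j - lrMean L v σ j))

/-! Writing `z = σ w` with `w` standard Gaussian, `σ² Var(ĝ)` is the covariance matrix of
`L (v + σ w) w`. Expand `L (v + σ w) = L v + σ A w + O(σ² ‖w‖²)`. The constant term contributes
`L v ^ 2 • 1`. Its covariances with the linear term vanish, because `w i` is odd and `(A w) (w j)`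
is even while the law of `w` is symmetric, so there is no contribution of order `σ`. All remaining
covariances are `O(σ²)`, the Gaussian moments being finite. -/

open ProbabilityTheory Topology
open scoped ENNReal NNReal InnerProductSpace

section Asymptotics

variable {Ω ι : Type*} {mΩ : MeasurableSpace Ω} {μ : Measure Ω} [IsFiniteMeasure μ]

lemma abs_covariance_le_of_abs_le {X Y f g : Ω → ℝ} (hf : MemLp f 2 μ) (hg : MemLp g 2 μ)
    (hX : ∀ ω, |X ω| ≤ f ω) (hY : ∀ ω, |Y ω| ≤ g ω) :
    |cov[X, Y; μ]| ≤ ∫ ω, (f ω + μ[f]) * (g ω + μ[g]) ∂μ := by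
  have norm_sub_mean_le {Z h : Ω → ℝ} (hh : MemLp h 2 μ) (hZ : ∀ ω, |Z ω| ≤ h ω) (ω : Ω) :
      ‖Z ω - μ[Z]‖ ≤ h ω + μ[h] :=
    (norm_sub_le (Z ω) _).trans <| add_le_add (hZ ω) <|
      norm_integral_le_of_norm_le (hh.integrable one_le_two) (.of_forall hZ)
  rw [covariance, ← Real.norm_eq_abs]
  refine norm_integral_le_of_norm_le ?_ (.of_forall fun ω ↦ ?_)
  · exact (hf.add (memLp_const _)).integrable_mul (hg.add (memLp_const _))
  · rw [norm_mul]
    gcongr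
    exacts [(norm_nonneg _).trans (norm_sub_mean_le hf hX ω), norm_sub_mean_le hf hX ω,
      norm_sub_mean_le hg hY ω]

lemma isBigO_covariance {l : Filter ι} {X Y : ι → Ω → ℝ} {a b : ι → ℝ} {f g : Ω → ℝ}
    (hf : MemLp f 2 μ) (hg : MemLp g 2 μ)
    (hX : ∀ᶠ t in l, ∀ ω, |X t ω| ≤ |a t| * f ω) (hY : ∀ᶠ t in l, ∀ ω, |Y t ω| ≤ |b t| * g ω) :
    (fun t ↦ cov[X t, Y t; μ]) =O[l] fun t ↦ a t * b t := by
  refine .of_bound (∫ ω, (f ω + μ[f]) * (g ω + μ[g]) ∂μ) ?_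
  filter_upwards [hX, hY] with t hXt hYt
  calc |cov[X t, Y t; μ]|
      ≤ ∫ ω, (|a t| * f ω + ∫ ω, |a t| * f ω ∂μ) * (|b t| * g ω + ∫ ω, |b t| * g ω ∂μ) ∂μ :=
        abs_covariance_le_of_abs_le (hf.const_mul _) (hg.const_mul _) hXt hYt
    _ = (∫ ω, (f ω + μ[f]) * (g ω + μ[g]) ∂μ) * ‖a t * b t‖ := by
        simp_rw [integral_const_mul, ← mul_add, mul_mul_mul_comm |a t|, integral_const_mul,
          norm_mul, Real.norm_eq_abs, mul_comm]

end Asymptotics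

section Symmetric

variable {G : Type*} [AddGroup G] [MeasurableSpace G] [MeasurableNeg G] {μ : Measure G}
  [μ.IsNegInvariant]

lemma integral_eq_zero_of_odd {F : Type*} [NormedAddCommGroup F] [NormedSpace ℝ F] {f : G → F}
    (hf : f.Odd) : ∫ x, f x ∂μ = 0 := by
  have := IsAddTorsionFree.of_isTorsionFree ℝ F
  have h := integral_neg_eq_self f μ
  simp only [hf _, integral_neg] at h
  exact self_eq_neg.mp h.symm

lemma covariance_eq_zero_of_odd_of_even {X Y : G → ℝ} (hX : X.Odd) (hY : Y.Even) :
    cov[X, Y; μ] = 0 := by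
  refine integral_eq_zero_of_odd fun x ↦ ?_
  rw [integral_eq_zero_of_odd hX, hX, hY]
  ring

end Symmetric

section Expansion

variable {E F : Type*} [NormedAddCommGroup E] [NormedSpace ℝ E] [NormedAddCommGroup F]
  [NormedSpace ℝ F]

/-- The first-order expansion `f (v + h) = f v + A h + O(‖h‖²)`, with the explicit constant `C` and
for *all* increments `h`. The expansion is global because a Gaussian increment is unbounded. -/
def HasFirstOrderExpansionWith (C : ℝ≥0) (f : E → F) (A : E →L[ℝ] F) (v : E) : Prop :=
  ∀ h, ‖f (v + h) - f v - A h‖ ≤ C * ‖h‖ ^ 2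

lemma hasFirstOrderExpansionWith_fderiv {C : ℝ≥0} {f : E → F} (hf : Differentiable ℝ f)
    (hC : LipschitzWith C (fderiv ℝ f)) (v : E) :
    HasFirstOrderExpansionWith C f (fderiv ℝ f v) v := by
  intro h
  have fderiv_sub_le : ∀ x ∈ Metric.closedBall v ‖h‖,
      ‖fderiv ℝ f x - fderiv ℝ f v‖ ≤ C * ‖h‖ := fun x hx ↦
    (hC.norm_sub_le x v).trans (by gcongr; exact mem_closedBall_iff_norm.mp hx)
  simpa [sq, mul_assoc] using
    (convex_closedBall v ‖h‖).norm_image_sub_le_of_norm_fderiv_le' (x := v) (y := v + h)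
      (φ := fderiv ℝ f v) (fun x _ ↦ hf x) fderiv_sub_le (by simp) (by simp)

lemma exists_hasFirstOrderExpansionWith_of_contDiff_two {f : E → F} (hf : ContDiff ℝ 2 f)
    (hC : ∃ C : ℝ, ∀ x, ‖iteratedFDeriv ℝ 2 f x‖ ≤ C) (v : E) :
    ∃ C, HasFirstOrderExpansionWith C f (fderiv ℝ f v) v := by
  obtain ⟨C, hC⟩ := hC
  have hf' : Differentiable ℝ (fderiv ℝ f) :=
    (hf.fderiv_right (m := 1) one_add_one_eq_two.le).differentiable one_ne_zero
  refine ⟨C.toNNReal, hasFirstOrderExpansionWith_fderiv (hf.differentiable two_ne_zero)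
    (lipschitzWith_of_nnnorm_fderiv_le hf' fun x ↦ ?_) v⟩
  rw [← norm_toNNReal, ← norm_iteratedFDeriv_one, norm_iteratedFDeriv_fderiv]
  exact Real.toNNReal_le_toNNReal (hC x)

lemma increment_mul_eq_linear_add_remainder {L : E → ℝ} (A ℓ : StrongDual ℝ E) (v : E) (σ : ℝ) :
    (fun w ↦ (L (v + σ • w) - L v) * ℓ w) =
      (fun w ↦ σ * (A w * ℓ w)) + fun w ↦ (L (v + σ • w) - L v - A (σ • w)) * ℓ w := by
  ext w
  simp only [Pi.add_apply, map_smul, smul_eq_mul]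
  ring

namespace HasFirstOrderExpansionWith

variable {C : ℝ≥0} {f : E → F} {A : E →L[ℝ] F} {v : E}

lemma norm_sub_le (hf : HasFirstOrderExpansionWith C f A v) (h : E) :
    ‖f (v + h) - f v‖ ≤ ‖A‖ * ‖h‖ + C * ‖h‖ ^ 2 := by
  calc ‖f (v + h) - f v‖ = ‖A h + (f (v + h) - f v - A h)‖ := by rw [add_sub_cancel]
    _ ≤ ‖A h‖ + ‖f (v + h) - f v - A h‖ := norm_add_le _ _
    _ ≤ ‖A‖ * ‖h‖ + C * ‖h‖ ^ 2 := add_le_add (A.le_opNorm h) (hf h)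

lemma norm_smul_sub_le (hf : HasFirstOrderExpansionWith C f A v) {σ : ℝ} (hσ : |σ| ≤ 1) (w : E) :
    ‖f (v + σ • w) - f v‖ ≤ |σ| * (‖A‖ * ‖w‖ + C * ‖w‖ ^ 2) := by
  calc ‖f (v + σ • w) - f v‖ ≤ ‖A‖ * ‖σ • w‖ + C * ‖σ • w‖ ^ 2 := hf.norm_sub_le _
    _ = |σ| * (‖A‖ * ‖w‖ + |σ| * (C * ‖w‖ ^ 2)) := by rw [norm_smul, Real.norm_eq_abs]; ring
    _ ≤ |σ| * (‖A‖ * ‖w‖ + C * ‖w‖ ^ 2) := by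
        have := mul_le_of_le_one_left (by positivity : 0 ≤ C * ‖w‖ ^ 2) hσ
        gcongr

variable {L : E → ℝ} {A : StrongDual ℝ E}

lemma abs_increment_mul_le (hA : HasFirstOrderExpansionWith C L A v) (ℓ : StrongDual ℝ E) {σ : ℝ}
    (hσ : |σ| ≤ 1) (w : E) :
    |(L (v + σ • w) - L v) * ℓ w| ≤ |σ| * (‖ℓ‖ * (‖A‖ * ‖w‖ ^ 2 + C * ‖w‖ ^ 3)) := by
  calc |(L (v + σ • w) - L v) * ℓ w|
      ≤ (|σ| * (‖A‖ * ‖w‖ + C * ‖w‖ ^ 2)) * (‖ℓ‖ * ‖w‖) := by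
        rw [abs_mul]
        gcongr
        exacts [hA.norm_smul_sub_le hσ w, ℓ.le_opNorm w]
    _ = |σ| * (‖ℓ‖ * (‖A‖ * ‖w‖ ^ 2 + C * ‖w‖ ^ 3)) := by ring

lemma abs_remainder_mul_le (hA : HasFirstOrderExpansionWith C L A v) (ℓ : StrongDual ℝ E) (σ : ℝ)
    (w : E) :
    |(L (v + σ • w) - L v - A (σ • w)) * ℓ w| ≤ |σ ^ 2| * (‖ℓ‖ * (C * ‖w‖ ^ 3)) := by
  calc |(L (v + σ • w) - L v - A (σ • w)) * ℓ w|
      ≤ (C * ‖σ • w‖ ^ 2) * (‖ℓ‖ * ‖w‖) := by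
        rw [abs_mul]
        gcongr
        exacts [hA _, ℓ.le_opNorm w]
    _ = |σ ^ 2| * (‖ℓ‖ * (C * ‖w‖ ^ 3)) := by
        rw [norm_smul, Real.norm_eq_abs, abs_pow]
        ring

end HasFirstOrderExpansionWith

end Expansion

section Moments

variable {E : Type*} [NormedAddCommGroup E] [MeasurableSpace E] {μ : Measure E}
  [IsFiniteMeasure μ] {p q : ℝ≥0∞}

lemma memLp_norm_pow_of_mul_le (hμ : MemLp id q μ) {k : ℕ} (hk : k ≠ 0) (hkq : k * p ≤ q) :
    MemLp (fun w : E ↦ ‖w‖ ^ k) p μ := by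
  simpa [mul_comm, ENNReal.mul_div_cancel_right, hk] using
    (hμ.mono_exponent hkq).norm_rpow_div (k : ℝ≥0∞)

variable [NormedSpace ℝ E]

lemma memLp_dual_of_le (hμ : MemLp id q μ) (hpq : p ≤ q) (ℓ : StrongDual ℝ E) : MemLp ℓ p μ :=
  ℓ.comp_memLp' (hμ.mono_exponent hpq)

lemma memLp_dual_mul_dual_of_two_mul_le [BorelSpace E] (hμ : MemLp id q μ) (hpq : 2 * p ≤ q)
    (A ℓ : StrongDual ℝ E) : MemLp (fun w ↦ A w * ℓ w) p μ := by
  have memLp_sq : MemLp (fun w : E ↦ ‖w‖ ^ 2) p μ := memLp_norm_pow_of_mul_le hμ two_ne_zero hpq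
  refine (memLp_sq.const_mul (‖A‖ * ‖ℓ‖)).mono' (by fun_prop) (.of_forall fun w ↦ ?_)
  calc ‖A w * ℓ w‖ ≤ (‖A‖ * ‖w‖) * (‖ℓ‖ * ‖w‖) := by
        rw [norm_mul]
        gcongr
        exacts [A.le_opNorm w, ℓ.le_opNorm w]
    _ = ‖A‖ * ‖ℓ‖ * ‖w‖ ^ 2 := by ring

end Moments

section CovarianceExpansion

variable {E : Type*} [NormedAddCommGroup E] [NormedSpace ℝ E] [MeasurableSpace E]
  {μ : Measure E} [IsFiniteMeasure μ] {L : E → ℝ} {A : StrongDual ℝ E} {v : E} {C : ℝ≥0}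

namespace HasFirstOrderExpansionWith

lemma isBigO_covariance_increment_increment (hA : HasFirstOrderExpansionWith C L A v)
    (hμ : MemLp id 6 μ) (ℓ m : StrongDual ℝ E) :
    (fun σ : ℝ ↦ cov[fun w ↦ (L (v + σ • w) - L v) * ℓ w,
      fun w ↦ (L (v + σ • w) - L v) * m w; μ]) =O[𝓝 0] fun σ ↦ σ ^ 2 := by
  have abs_le_one : ∀ᶠ σ : ℝ in 𝓝 0, |σ| ≤ 1 :=
    (continuous_abs.tendsto' 0 0 abs_zero).eventually_le_const one_pos
  have memLp_bound (n : StrongDual ℝ E) :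
      MemLp (fun w : E ↦ ‖n‖ * (‖A‖ * ‖w‖ ^ 2 + C * ‖w‖ ^ 3)) 2 μ :=
    (((memLp_norm_pow_of_mul_le hμ two_ne_zero (by norm_num)).const_mul _).add
      ((memLp_norm_pow_of_mul_le hμ three_ne_zero (by norm_num)).const_mul _)).const_mul _
  simp only [sq]
  exact isBigO_covariance (memLp_bound ℓ) (memLp_bound m)
    (abs_le_one.mono fun σ hσ ↦ hA.abs_increment_mul_le ℓ hσ)
    (abs_le_one.mono fun σ hσ ↦ hA.abs_increment_mul_le m hσ)

lemma isBigO_covariance_dual_remainder (hA : HasFirstOrderExpansionWith C L A v)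
    (hμ : MemLp id 6 μ) (ℓ m : StrongDual ℝ E) :
    (fun σ : ℝ ↦ cov[ℓ, fun w ↦ (L (v + σ • w) - L v - A (σ • w)) * m w; μ])
      =O[𝓝 0] fun σ ↦ σ ^ 2 := by
  have hbound : MemLp (fun w : E ↦ ‖w‖ ^ 3) 2 μ :=
    memLp_norm_pow_of_mul_le hμ three_ne_zero (by norm_num)
  simpa using isBigO_covariance (a := fun _ ↦ 1) (memLp_dual_of_le hμ (by norm_num) ℓ).norm
    ((hbound.const_mul C).const_mul ‖m‖) (X := fun _ ↦ ℓ) (by simp)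
    (.of_forall (hA.abs_remainder_mul_le m))

variable [BorelSpace E]

lemma memLp_remainder_mul (hA : HasFirstOrderExpansionWith C L A v)
    (hμ : MemLp id 6 μ) (hL : Measurable L) (ℓ : StrongDual ℝ E) (σ : ℝ) :
    MemLp (fun w ↦ (L (v + σ • w) - L v - A (σ • w)) * ℓ w) 2 μ := by
  have : Measurable fun w ↦ L (v + σ • w) :=
    hL.comp (f := fun w ↦ v + σ • w) (Continuous.measurable (by fun_prop))
  have hbound : MemLp (fun w : E ↦ ‖w‖ ^ 3) 2 μ :=
    memLp_norm_pow_of_mul_le hμ three_ne_zero (by norm_num)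
  exact (((hbound.const_mul C).const_mul ‖ℓ‖).const_mul |σ ^ 2|).mono'
    (by fun_prop) (.of_forall (hA.abs_remainder_mul_le ℓ σ))

lemma memLp_increment_mul (hA : HasFirstOrderExpansionWith C L A v)
    (hμ : MemLp id 6 μ) (hL : Measurable L) (ℓ : StrongDual ℝ E) (σ : ℝ) :
    MemLp (fun w ↦ (L (v + σ • w) - L v) * ℓ w) 2 μ := by
  rw [increment_mul_eq_linear_add_remainder A]
  exact ((memLp_dual_mul_dual_of_two_mul_le hμ (by norm_num) A ℓ).const_mul σ).add
    (hA.memLp_remainder_mul hμ hL ℓ σ)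

variable [μ.IsNegInvariant]

lemma covariance_dual_increment (hA : HasFirstOrderExpansionWith C L A v)
    (hμ : MemLp id 6 μ) (hL : Measurable L) (ℓ m : StrongDual ℝ E) (σ : ℝ) :
    cov[ℓ, fun w ↦ (L (v + σ • w) - L v) * m w; μ] =
      cov[ℓ, fun w ↦ (L (v + σ • w) - L v - A (σ • w)) * m w; μ] := by
  have linear_term : cov[ℓ, fun w ↦ A w * m w; μ] = 0 :=
    covariance_eq_zero_of_odd_of_even (map_neg ℓ) fun w ↦ by simp
  rw [increment_mul_eq_linear_add_remainder A,
    covariance_add_right (memLp_dual_of_le hμ (by norm_num) ℓ)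
      ((memLp_dual_mul_dual_of_two_mul_le hμ (by norm_num) A m).const_mul σ)
      (hA.memLp_remainder_mul hμ hL m σ),
    covariance_const_mul_right, linear_term, mul_zero, zero_add]

lemma isBigO_covariance_sub (hA : HasFirstOrderExpansionWith C L A v)
    (hμ : MemLp id 6 μ) (hL : Measurable L) (ℓ m : StrongDual ℝ E) :
    (fun σ : ℝ ↦ cov[fun w ↦ L (v + σ • w) * ℓ w, fun w ↦ L (v + σ • w) * m w; μ]
      - L v ^ 2 * cov[ℓ, m; μ]) =O[𝓝 0] fun σ ↦ σ ^ 2 := by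
  set D : StrongDual ℝ E → ℝ → E → ℝ := fun n σ w ↦ (L (v + σ • w) - L v) * n w with hD
  have split (n : StrongDual ℝ E) (σ : ℝ) :
      (fun w ↦ L (v + σ • w) * n w) = (fun w ↦ L v * n w) + D n σ := by
    ext w
    simp only [hD, Pi.add_apply]
    ring
  have memLp_linear (n : StrongDual ℝ E) : MemLp (fun w ↦ L v * n w) 2 μ :=
    (memLp_dual_of_le hμ (by norm_num) n).const_mul (L v)
  have memLp_D (n : StrongDual ℝ E) (σ : ℝ) : MemLp (D n σ) 2 μ := hA.memLp_increment_mul hμ hL n σ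
  have covariance_split (σ : ℝ) :
      cov[fun w ↦ L (v + σ • w) * ℓ w, fun w ↦ L (v + σ • w) * m w; μ] - L v ^ 2 * cov[ℓ, m; μ] =
        L v * cov[ℓ, D m σ; μ] + L v * cov[m, D ℓ σ; μ] + cov[D ℓ σ, D m σ; μ] := by
    rw [split ℓ, split m, covariance_add_left (memLp_linear ℓ) (memLp_D ℓ σ)
      ((memLp_linear m).add (memLp_D m σ)), covariance_add_right (memLp_linear ℓ) (memLp_linear m)
      (memLp_D m σ), covariance_add_right (memLp_D ℓ σ) (memLp_linear m) (memLp_D m σ)]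
    simp only [covariance_const_mul_left, covariance_const_mul_right, covariance_comm (D ℓ σ) m]
    ring
  have cross (n n' : StrongDual ℝ E) : (fun σ ↦ cov[n, D n' σ; μ]) =O[𝓝 0] fun σ ↦ σ ^ 2 :=
    (hA.isBigO_covariance_dual_remainder hμ n n').congr_left fun σ ↦
      (hA.covariance_dual_increment hμ hL n n' σ).symm
  simp only [covariance_split]
  exact (((cross ℓ m).const_mul_left _).add ((cross m ℓ).const_mul_left _)).add
    (hA.isBigO_covariance_increment_increment hμ ℓ m)

end HasFirstOrderExpansionWith

end CovarianceExpansion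

instance isNegInvariant_stdGaussian {E : Type*} [NormedAddCommGroup E] [InnerProductSpace ℝ E]
    [FiniteDimensional ℝ E] [MeasurableSpace E] [BorelSpace E] :
    (stdGaussian E).IsNegInvariant where
  neg_eq_self := stdGaussian_map (LinearIsometryEquiv.neg ℝ)

section GaussDensity

variable {d : ℕ} {σ : ℝ}

lemma gaussDensity_eq_rpow_mul_exp (x : EuclideanSpace ℝ (Fin d)) :
    gaussDensity d σ x =
      (π / (2 * σ ^ 2)⁻¹) ^ (-(d / 2 : ℝ)) * rexp (-(2 * σ ^ 2)⁻¹ * ‖x‖ ^ 2) := by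
  rw [gaussDensity, div_inv_eq_mul]
  congr 2 <;> ring

lemma gaussDensity_nonneg (x : EuclideanSpace ℝ (Fin d)) : 0 ≤ gaussDensity d σ x := by
  unfold gaussDensity
  positivity

lemma continuous_gaussDensity : Continuous (gaussDensity d σ) := by
  unfold gaussDensity
  fun_prop

lemma integrable_gaussDensity (hσ : σ ≠ 0) : Integrable (gaussDensity d σ) := by
  have hb : 0 < (2 * σ ^ 2)⁻¹ := by positivity
  have integrable_exp :
      Integrable fun x : EuclideanSpace ℝ (Fin d) ↦ rexp (-(2 * σ ^ 2)⁻¹ * ‖x‖ ^ 2) := by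
    refine .of_integral_ne_zero ?_
    rw [GaussianFourier.integral_rexp_neg_mul_sq_norm hb]
    positivity
  exact (integrable_exp.const_mul _).congr
    (.of_forall fun x ↦ (gaussDensity_eq_rpow_mul_exp x).symm)

lemma integral_gaussDensity_mul_cexp (hσ : σ ≠ 0) (t : EuclideanSpace ℝ (Fin d)) :
    ∫ x, (gaussDensity d σ x : ℂ) * Complex.exp (⟪x, t⟫_ℝ * Complex.I) =
      Complex.exp (-‖σ • t‖ ^ 2 / 2) := by
  set b : ℝ := (2 * σ ^ 2)⁻¹ with hb_def
  have hb : 0 < b := by positivity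
  have integrand_eq (x : EuclideanSpace ℝ (Fin d)) :
      (gaussDensity d σ x : ℂ) * Complex.exp (⟪x, t⟫_ℝ * Complex.I) =
        (π / b : ℂ) ^ (-(d / 2 : ℂ)) *
          Complex.exp (-b * ‖x‖ ^ 2 + Complex.I * ⟪t, x⟫_ℝ) := by
    rw [gaussDensity_eq_rpow_mul_exp, ← hb_def, Complex.exp_add, real_inner_comm,
      mul_comm Complex.I]
    push_cast [Complex.ofReal_cpow (by positivity : 0 ≤ π / b)]
    ring
  have normalization : (π / b : ℂ) ^ (-(d / 2 : ℂ)) * (π / b : ℂ) ^ (d / 2 : ℂ) = 1 := by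
    have : (π / b : ℂ) ≠ 0 := by exact_mod_cast (by positivity : π / b ≠ 0)
    rw [← Complex.cpow_add _ _ this, neg_add_cancel, Complex.cpow_zero]
  have exponent_eq : Complex.I ^ 2 * ‖t‖ ^ 2 / (4 * b) = -‖σ • t‖ ^ 2 / 2 := by
    rw [norm_smul, hb_def]
    push_cast [Complex.I_sq, Real.norm_eq_abs, mul_pow, ← Complex.ofReal_pow, sq_abs]
    field_simp
    norm_num
  simp_rw [integrand_eq, integral_const_mul]
  rw [GaussianFourier.integral_cexp_neg_mul_sq_norm_add (by simpa), finrank_euclideanSpace_fin,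
    ← mul_assoc, normalization, one_mul, exponent_eq]

lemma withDensity_gaussDensity (hσ : σ ≠ 0) :
    volume.withDensity (fun x ↦ ENNReal.ofReal (gaussDensity d σ x)) =
      (stdGaussian (EuclideanSpace ℝ (Fin d))).map (σ • ·) := by
  have := isFiniteMeasure_withDensity_ofReal (integrable_gaussDensity (d := d) hσ).2
  refine Measure.ext_of_charFun (funext fun t ↦ ?_)
  rw [charFun_map_smul, charFun_stdGaussian, charFun_apply,
    integral_withDensity_eq_integral_toReal_smul
      continuous_gaussDensity.measurable.ennreal_ofReal (by simp),
    ← integral_gaussDensity_mul_cexp hσ]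
  simp [ENNReal.toReal_ofReal, gaussDensity_nonneg]

lemma integral_gaussDensity_mul (hσ : σ ≠ 0) (F : EuclideanSpace ℝ (Fin d) → ℝ) :
    ∫ z, gaussDensity d σ z * F z =
      ∫ w, F (σ • w) ∂(stdGaussian (EuclideanSpace ℝ (Fin d))) := by
  rw [← (measurableEmbedding_const_smul₀ hσ).integral_map, ← withDensity_gaussDensity hσ,
    integral_withDensity_eq_integral_toReal_smul
      continuous_gaussDensity.measurable.ennreal_ofReal (by simp)]
  simp [ENNReal.toReal_ofReal, gaussDensity_nonneg]

end GaussDensity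

section Proxy

variable {d : ℕ} (L : EuclideanSpace ℝ (Fin d) → ℝ) (v : EuclideanSpace ℝ (Fin d))

lemma sq_mul_lrCov_eq_covariance {σ : ℝ} (hσ : σ ≠ 0) (i j : Fin d) :
    σ ^ 2 * lrCov L v σ i j =
      cov[fun w ↦ L (v + σ • w) * w i, fun w ↦ L (v + σ • w) * w j;
        stdGaussian (EuclideanSpace ℝ (Fin d))] := by
  have proxy_smul (k : Fin d) (w : EuclideanSpace ℝ (Fin d)) :
      (σ ^ 2)⁻¹ * L (v + σ • w) * (σ • w) k = σ⁻¹ * (L (v + σ • w) * w k) := by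
    rw [PiLp.smul_apply, smul_eq_mul]
    field_simp
  have hmean (k : Fin d) : lrMean L v σ k = ∫ w, σ⁻¹ * (L (v + σ • w) * w k)
      ∂(stdGaussian (EuclideanSpace ℝ (Fin d))) := by
    simp only [lrMean, integral_gaussDensity_mul hσ, proxy_smul]
  have hcov : lrCov L v σ i j =
      cov[fun w ↦ σ⁻¹ * (L (v + σ • w) * w i), fun w ↦ σ⁻¹ * (L (v + σ • w) * w j);
        stdGaussian (EuclideanSpace ℝ (Fin d))] := by
    simp only [lrCov, integral_gaussDensity_mul hσ, proxy_smul, hmean, covariance]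
  rw [hcov, covariance_const_mul_left, covariance_const_mul_right]
  field_simp

lemma covariance_eval_stdGaussian (i j : Fin d) :
    cov[fun w ↦ w i, fun w ↦ w j; stdGaussian (EuclideanSpace ℝ (Fin d))] =
      if i = j then 1 else 0 := by
  rw [← multivariateGaussian_zero_one, covariance_eval_multivariateGaussian .one,
    Matrix.one_apply]

lemma isBigO_sq_mul_lrCov_sub (hL : Measurable L) {A : StrongDual ℝ (EuclideanSpace ℝ (Fin d))}
    {C : ℝ≥0} (hA : HasFirstOrderExpansionWith C L A v) (i j : Fin d) :
    (fun σ : ℝ ↦ σ ^ 2 * lrCov L v σ i j - L v ^ 2 * (if i = j then 1 else 0))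
      =O[𝓝[>] 0] fun σ ↦ σ ^ 2 := by
  have hμ : MemLp id 6 (stdGaussian (EuclideanSpace ℝ (Fin d))) :=
    IsGaussian.memLp_id _ 6 (by norm_num)
  refine ((hA.isBigO_covariance_sub hμ hL (EuclideanSpace.proj i) (EuclideanSpace.proj j)).mono
    nhdsWithin_le_nhds).congr' ?_ .rfl
  filter_upwards [self_mem_nhdsWithin] with σ hσ
  rw [sq_mul_lrCov_eq_covariance L v hσ.ne', ← covariance_eval_stdGaussian i j]
  rfl

end Proxy

theorem lr_proxy_variance_general {d : ℕ} (L : EuclideanSpace ℝ (Fin d) → ℝ)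
    (v : EuclideanSpace ℝ (Fin d)) (hL : Measurable L)
    {A : StrongDual ℝ (EuclideanSpace ℝ (Fin d))} {C : ℝ≥0}
    (hA : HasFirstOrderExpansionWith C L A v) :
    (∀ i j : Fin d,
      (fun σ : ℝ ↦ lrCov L v σ i j - (L v ^ 2 / σ ^ 2) * (if i = j then 1 else 0))
        =O[𝓝[>] 0] (fun _ : ℝ ↦ (1 : ℝ))) ∧
    (∀ i j : Fin d,
      Tendsto (fun σ : ℝ ↦ σ ^ 2 * lrCov L v σ i j) (𝓝[>] 0)
        (𝓝 (L v ^ 2 * (if i = j then 1 else 0)))) := by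
  have ne_zero : ∀ᶠ σ : ℝ in 𝓝[>] 0, σ ≠ 0 := eventually_mem_nhdsWithin.mono fun _ hσ ↦ hσ.ne'
  have sq_tendsto : Tendsto (fun σ : ℝ ↦ σ ^ 2) (𝓝[>] 0) (𝓝 0) :=
    tendsto_nhdsWithin_of_tendsto_nhds ((continuous_pow 2).tendsto' 0 0 (zero_pow two_ne_zero))
  refine ⟨fun i j ↦ ?_, fun i j ↦ ?_⟩
  · refine ((isBigO_refl (fun σ : ℝ ↦ (σ ^ 2)⁻¹) _).mul
      (isBigO_sq_mul_lrCov_sub L v hL hA i j)).congr' ?_ ?_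
    · filter_upwards [ne_zero] with σ hσ
      field_simp
    · filter_upwards [ne_zero] with σ hσ
      exact inv_mul_cancel₀ (pow_ne_zero 2 hσ)
  · exact tendsto_sub_nhds_zero_iff.mp
      ((isBigO_sq_mul_lrCov_sub L v hL hA i j).trans_tendsto sq_tendsto)

/-- For `z ∼ N(0, σ²I_d)` and smooth `L` with `L(v) = L₀ ≠ 0`, the covariance of the
likelihood ratio proxy satisfies `Var(ĝ) = (L₀²/σ²)·I + O(1)` as `σ ↓ 0`; in particular
`σ²·Var(ĝ) → L₀²·I` entrywise as `σ ↓ 0`. -/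
theorem lr_proxy_variance {d : ℕ} (L : EuclideanSpace ℝ (Fin d) → ℝ)
    (v : EuclideanSpace ℝ (Fin d))
    (hL : ContDiff ℝ 3 L)
    (hbdd : ∀ n : ℕ, n ≤ 3 → ∃ C : ℝ, ∀ x, ‖iteratedFDeriv ℝ n L x‖ ≤ C)
    (hL0 : L v ≠ 0) :
    (∀ i j : Fin d,
      (fun σ : ℝ => lrCov L v σ i j - (L v ^ 2 / σ ^ 2) * (if i = j then 1 else 0))
        =O[nhdsWithin 0 (Set.Ioi 0)] (fun _ : ℝ => (1 : ℝ))) ∧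
    (∀ i j : Fin d,
      Tendsto (fun σ : ℝ => σ ^ 2 * lrCov L v σ i j)
        (nhdsWithin 0 (Set.Ioi 0)) (nhds (L v ^ 2 * (if i = j then 1 else 0)))) := by
  obtain ⟨C, hC⟩ := exists_hasFirstOrderExpansionWith_of_contDiff_two
    (hL.of_le (by norm_num)) (hbdd 2 (by norm_num)) v
  exact lr_proxy_variance_general L v hL.continuous.measurable hC
end

section
/- Let μ₀ be the density of N(0, σ²) on ℝ and let ν = (1−q)μ₀ + q·Γ₁μ₀ be the mixture with the translated density Γ₁μ₀(ω) = μ₀(ω−1). If q ≤ 1/5, σ ≥ 4, and α > 1 satisfies α ≤ (1/2)σ²A − 2ln σ and α ≤ ((1/2)σ²A² − ln 5 − 2ln σ)/(A + ln(qα) + 1/(2σ²)) with A = ln(1 + 1/(q(α−1))), then the Rényi divergence of order α between μ₀ and ν satisfies D_α(μ₀‖ν) ≤ 2q²α/σ². -/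
open MeasureTheory Real

/-- Density of `N(0, σ²)` on `ℝ`. -/
noncomputable def gauss1D (σ : ℝ) (ω : ℝ) : ℝ :=
  (2 * Real.pi * σ ^ 2) ^ (-(1 : ℝ) / 2) * Real.exp (-ω ^ 2 / (2 * σ ^ 2))

/-!
Let `X` be the likelihood ratio of the translated Gaussian to the centred one, so that the integral
is the moment `𝔼[(1 - q + q X) ^ (-n)]` with `n = α - 1`, and set `s = 1 / σ ^ 2`. If
`1 ≤ q (3 n + 4)`, weighted AM-GM gives `(1 - q + q X) ^ (-n) ≤ X ^ (-q n)`, whose mean is explicit.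
Otherwise `q (n + 2) ≤ 1 / 2`, and a second-order Bernoulli inequality bounds the moment by
`1 + n (n + 1) q ^ 2 Var[X]`, where `Var[X] = exp s - 1 ≤ 2 s`. Translating by `a` instead of `1`
replaces `s` by `a ^ 2 / σ ^ 2`.
-/

open ProbabilityTheory
open scoped NNReal

lemma log_le_of_nonneg_of_le_exp {x c : ℝ} (hx : 0 ≤ x) (hc : 0 ≤ c) (h : x ≤ exp c) :
    log x ≤ c := by
  calc log x ≤ log⁺ x := le_max_right _ _
    _ ≤ log⁺ (exp c) := posLog_le_posLog hx h
    _ = c := by rw [posLog_apply, log_exp, max_eq_right hc]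

section Mixture

variable {n q : ℝ}

lemma hasDerivAt_one_add_rpow (p : ℝ) {x : ℝ} (hx : 0 < 1 + x) :
    HasDerivAt (fun y ↦ (1 + y) ^ p) (p * (1 + x) ^ (p - 1)) x := by
  simpa using ((hasDerivAt_id x).const_add 1).rpow_const (p := p) (.inl hx.ne')

lemma one_add_rpow_neg_le_two {p x : ℝ} (hp : 1 ≤ p) (hx : -(1 / 2) ≤ p * x) :
    (1 + x) ^ (-p) ≤ 2 := by
  have one_add_pos : 0 < 1 + x := by nlinarith
  have bernoulli : 1 + p * x ≤ (1 + x) ^ p := one_add_mul_self_le_rpow_one_add (by linarith) hp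
  rw [rpow_neg one_add_pos.le]
  exact inv_le_of_inv_le₀ two_pos (by linarith)

lemma convexOn_quadratic_sub_one_add_rpow_neg (hn : 0 ≤ n) :
    ConvexOn ℝ (Set.Ici (-(1 / 2) / (n + 2)))
      fun x ↦ 1 - n * x + n * (n + 1) * x ^ 2 - (1 + x) ^ (-n) := by
  let f' : ℝ → ℝ := fun x ↦ -n + 2 * n * (n + 1) * x + n * (1 + x) ^ (-n - 1)
  let f'' : ℝ → ℝ := fun x ↦ n * (n + 1) * (2 - (1 + x) ^ (-(n + 2)))
  have neg_half_le {x : ℝ} (hx : x ∈ Set.Ici (-(1 / 2) / (n + 2))) :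
      -(1 / 2) ≤ (n + 2) * x := by
    rwa [Set.mem_Ici, div_le_iff₀' (by linarith)] at hx
  have one_add_pos {x : ℝ} (hx : x ∈ Set.Ici (-(1 / 2) / (n + 2))) : 0 < 1 + x := by
    nlinarith [neg_half_le hx]
  refine convexOn_of_hasDerivWithinAt2_nonneg (f' := f') (f'' := f'') (convex_Ici _) ?_
    (fun x hx ↦ HasDerivAt.hasDerivWithinAt ?_) (fun x hx ↦ HasDerivAt.hasDerivWithinAt ?_)
    (fun x hx ↦ ?_)
  · exact fun x hx ↦ ContinuousAt.continuousWithinAt <| by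
      have := (hasDerivAt_one_add_rpow (-n) (one_add_pos hx)).continuousAt
      fun_prop
  · refine (((((hasDerivAt_id x).const_mul n).const_sub 1).add
      ((hasDerivAt_pow 2 x).const_mul (n * (n + 1)))).sub
      (hasDerivAt_one_add_rpow (-n) (one_add_pos (interior_subset hx)))).congr_deriv ?_
    simp only [f']
    push_cast
    ring
  · refine ((((hasDerivAt_id x).const_mul (2 * n * (n + 1))).const_add (-n)).add
      ((hasDerivAt_one_add_rpow (-n - 1) (one_add_pos (interior_subset hx))).const_mul
        n)).congr_deriv ?_
    simp only [f'', show -n - 1 - 1 = -(n + 2) by ring]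
    ring
  · have := one_add_rpow_neg_le_two (by linarith) (neg_half_le (interior_subset hx))
    exact mul_nonneg (by positivity) (by linarith)

lemma one_add_rpow_neg_le {u : ℝ} (hn : 0 ≤ n) (hu : -(1 / 2) ≤ (n + 2) * u) :
    (1 + u) ^ (-n) ≤ 1 - n * u + n * (n + 1) * u ^ 2 := by
  have hasDerivAt_zero : HasDerivAt
      (fun x ↦ 1 - n * x + n * (n + 1) * x ^ 2 - (1 + x) ^ (-n)) 0 0 := by
    refine (((((hasDerivAt_id 0).const_mul n).const_sub 1).add
      ((hasDerivAt_pow 2 0).const_mul (n * (n + 1)))).sub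
      (hasDerivAt_one_add_rpow (-n) (by norm_num))).congr_deriv ?_
    norm_num
  have isMinOn_zero := (convexOn_quadratic_sub_one_add_rpow_neg hn).isMinOn_of_rightDeriv_eq_zero
    (x := 0) (by
      rw [interior_Ici, Set.mem_Ioi]
      exact div_neg_of_neg_of_pos (by norm_num) (by linarith))
    (hasDerivAt_zero.hasDerivWithinAt.derivWithin (uniqueDiffWithinAt_Ioi 0))
  have mem_Ici : u ∈ Set.Ici (-(1 / 2) / (n + 2)) := by
    rwa [Set.mem_Ici, div_le_iff₀' (by linarith)]
  simpa using isMinOn_zero mem_Ici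

lemma one_sub_add_mul_rpow_neg_le {x : ℝ} (hq₀ : 0 ≤ q) (hq₁ : q ≤ 1) (hn : 0 ≤ n) (hx : 0 < x) :
    (1 - q + q * x) ^ (-n) ≤ x ^ (-(q * n)) := by
  have weighted_amgm : x ^ q ≤ 1 - q + q * x := by
    simpa using geom_mean_le_arith_mean2_weighted (sub_nonneg.2 hq₁) hq₀ zero_le_one hx.le
      (sub_add_cancel 1 q)
  calc (1 - q + q * x) ^ (-n) ≤ (x ^ q) ^ (-n) :=
        rpow_le_rpow_of_nonpos (rpow_pos_of_pos hx q) weighted_amgm (neg_nonpos.2 hn)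
    _ = x ^ (-(q * n)) := by rw [← rpow_mul hx.le, mul_neg]

lemma integral_one_sub_add_mul_rpow_neg_le {Ω : Type*} [MeasurableSpace Ω] {μ : Measure Ω}
    [IsProbabilityMeasure μ] {X : Ω → ℝ} (hX : ∀ ω, 0 ≤ X ω) (hX₂ : MemLp X 2 μ) (hX₁ : μ[X] = 1)
    (hq : 0 ≤ q) (hn : 0 ≤ n) (hqn : q * (n + 2) ≤ 1 / 2) :
    ∫ ω, (1 - q + q * X ω) ^ (-n) ∂μ ≤ 1 + n * (n + 1) * q ^ 2 * Var[X; μ] := by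
  have bernoulli (ω : Ω) : (1 - q + q * X ω) ^ (-n) ≤
      1 - n * q * (X ω - 1) + n * (n + 1) * q ^ 2 * (X ω - 1) ^ 2 := by
    have := one_add_rpow_neg_le (u := q * (X ω - 1)) hn (by nlinarith [mul_nonneg hq (hX ω)])
    convert this using 1 <;> ring_nf
  have base_nonneg (ω : Ω) : 0 ≤ 1 - q + q * X ω := by nlinarith [mul_nonneg hq (hX ω)]
  have hX_int : Integrable (fun ω ↦ X ω - 1) μ :=
    (hX₂.integrable one_le_two).sub (integrable_const 1)
  have hX_sq_int : Integrable (fun ω ↦ (X ω - 1) ^ 2) μ :=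
    (hX₂.sub (memLp_const 1)).integrable_sq
  have mean_sub : ∫ ω, (X ω - 1) ∂μ = 0 := by
    rw [integral_sub (hX₂.integrable one_le_two) (integrable_const 1), hX₁]
    simp
  have linear_int : Integrable (fun ω ↦ 1 - n * q * (X ω - 1)) μ :=
    (integrable_const 1).sub (hX_int.const_mul _)
  calc ∫ ω, (1 - q + q * X ω) ^ (-n) ∂μ
      ≤ ∫ ω, (1 - n * q * (X ω - 1) + n * (n + 1) * q ^ 2 * (X ω - 1) ^ 2) ∂μ :=
        integral_mono_of_nonneg (.of_forall fun ω ↦ rpow_nonneg (base_nonneg ω) _)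
          (linear_int.add (hX_sq_int.const_mul _)) (.of_forall bernoulli)
    _ = 1 + n * (n + 1) * q ^ 2 * Var[X; μ] := by
        rw [integral_add linear_int (hX_sq_int.const_mul _),
          integral_sub (integrable_const 1) (hX_int.const_mul _), integral_const_mul,
          integral_const_mul, mean_sub, variance_eq_integral hX₂.aemeasurable, hX₁]
        simp

end Mixture

/-- The likelihood ratio at `ω` of the Gaussian `N(a, v)` to the centred Gaussian `N(0, v)`,
meaningful for `v ≠ 0`. -/
noncomputable def gaussianShiftRatio (v : ℝ≥0) (a ω : ℝ) : ℝ :=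
  exp ((2 * a * ω - a ^ 2) / (2 * v))

section Gaussian

variable {v : ℝ≥0} {a n q : ℝ}

lemma gaussianShiftRatio_pos (v : ℝ≥0) (a ω : ℝ) : 0 < gaussianShiftRatio v a ω :=
  exp_pos _

lemma gaussianPDFReal_eq_mul_gaussianShiftRatio (v : ℝ≥0) (a ω : ℝ) :
    gaussianPDFReal a v ω = gaussianPDFReal 0 v ω * gaussianShiftRatio v a ω := by
  simp only [gaussianPDFReal, gaussianShiftRatio, mul_assoc, ← exp_add]
  ring_nf

lemma gaussianShiftRatio_rpow (v : ℝ≥0) (a t ω : ℝ) :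
    gaussianShiftRatio v a ω ^ t = exp (-(t * a ^ 2 / (2 * v))) * exp (t * a / v * ω) := by
  rw [gaussianShiftRatio, ← exp_mul, ← exp_add]
  ring_nf

lemma integrable_gaussianShiftRatio_rpow (v : ℝ≥0) (a t : ℝ) :
    Integrable (fun ω ↦ gaussianShiftRatio v a ω ^ t) (gaussianReal 0 v) := by
  simp only [gaussianShiftRatio_rpow]
  exact (integrable_exp_mul_gaussianReal _).const_mul _

lemma integral_gaussianShiftRatio_rpow (hv : v ≠ 0) (a t : ℝ) :
    ∫ ω, gaussianShiftRatio v a ω ^ t ∂gaussianReal 0 v =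
      exp (t * (t - 1) * (a ^ 2 / v) / 2) := by
  have gaussian_mgf : ∫ ω, exp (t * a / v * ω) ∂gaussianReal 0 v =
      exp (0 * (t * a / v) + v * (t * a / v) ^ 2 / 2) :=
    mgf_gaussianReal (X := id) Measure.map_id _
  simp only [gaussianShiftRatio_rpow]
  rw [integral_const_mul, gaussian_mgf, ← exp_add]
  have : (v : ℝ) ≠ 0 := NNReal.coe_ne_zero.2 hv
  congr 1
  field_simp
  ring

lemma integral_gaussianShiftRatio (hv : v ≠ 0) (a : ℝ) :
    ∫ ω, gaussianShiftRatio v a ω ∂gaussianReal 0 v = 1 := by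
  simpa using integral_gaussianShiftRatio_rpow hv a 1

lemma memLp_two_gaussianShiftRatio (v : ℝ≥0) (a : ℝ) :
    MemLp (gaussianShiftRatio v a) 2 (gaussianReal 0 v) := by
  have continuous_ratio : Continuous (gaussianShiftRatio v a) := by
    unfold gaussianShiftRatio
    fun_prop
  rw [memLp_two_iff_integrable_sq continuous_ratio.aestronglyMeasurable]
  simpa using integrable_gaussianShiftRatio_rpow v a 2

lemma variance_gaussianShiftRatio (hv : v ≠ 0) (a : ℝ) :
    Var[gaussianShiftRatio v a; gaussianReal 0 v] = exp (a ^ 2 / v) - 1 := by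
  have second_moment : ∫ ω, gaussianShiftRatio v a ω ^ 2 ∂gaussianReal 0 v = exp (a ^ 2 / v) := by
    have := integral_gaussianShiftRatio_rpow hv a 2
    simp only [rpow_two] at this
    rw [this]
    ring_nf
  rw [variance_eq_sub (memLp_two_gaussianShiftRatio v a), integral_gaussianShiftRatio hv]
  simp [second_moment]

lemma integral_gaussian_mixture_eq (hv : v ≠ 0) (a : ℝ) (hq₀ : 0 ≤ q) (hq₁ : q ≤ 1) (α : ℝ) :
    ∫ ω, gaussianPDFReal 0 v ω ^ α *
        ((1 - q) * gaussianPDFReal 0 v ω + q * gaussianPDFReal a v ω) ^ (1 - α) =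
      ∫ ω, (1 - q + q * gaussianShiftRatio v a ω) ^ (1 - α) ∂gaussianReal 0 v := by
  rw [integral_gaussianReal_eq_integral_smul hv]
  refine integral_congr_ae (.of_forall fun ω ↦ ?_)
  have pdf_pos := gaussianPDFReal_pos 0 v ω hv
  have ratio_pos := gaussianShiftRatio_pos v a ω
  calc gaussianPDFReal 0 v ω ^ α *
        ((1 - q) * gaussianPDFReal 0 v ω + q * gaussianPDFReal a v ω) ^ (1 - α)
      = gaussianPDFReal 0 v ω ^ α *
        (gaussianPDFReal 0 v ω * (1 - q + q * gaussianShiftRatio v a ω)) ^ (1 - α) := by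
        rw [gaussianPDFReal_eq_mul_gaussianShiftRatio v a]
        ring_nf
    _ = gaussianPDFReal 0 v ω ^ (α + (1 - α)) *
        (1 - q + q * gaussianShiftRatio v a ω) ^ (1 - α) := by
        rw [mul_rpow pdf_pos.le (by nlinarith), rpow_add pdf_pos, mul_assoc]
    _ = gaussianPDFReal 0 v ω • (1 - q + q * gaussianShiftRatio v a ω) ^ (1 - α) := by
        rw [add_sub_cancel, rpow_one, smul_eq_mul]

lemma integral_gaussian_mixture_rpow_neg_le_exp_of_one_le (hv : v ≠ 0) (a : ℝ) (hq₀ : 0 ≤ q)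
    (hq₁ : q ≤ 1) (hn : 0 ≤ n) (hqn : 1 ≤ q * (3 * n + 4)) :
    ∫ ω, (1 - q + q * gaussianShiftRatio v a ω) ^ (-n) ∂gaussianReal 0 v ≤
      exp (2 * n * (n + 1) * q ^ 2 * (a ^ 2 / v)) := by
  have base_nonneg (ω : ℝ) : 0 ≤ 1 - q + q * gaussianShiftRatio v a ω := by
    nlinarith [gaussianShiftRatio_pos v a ω]
  calc ∫ ω, (1 - q + q * gaussianShiftRatio v a ω) ^ (-n) ∂gaussianReal 0 v
      ≤ ∫ ω, gaussianShiftRatio v a ω ^ (-(q * n)) ∂gaussianReal 0 v :=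
        integral_mono_of_nonneg (.of_forall fun ω ↦ rpow_nonneg (base_nonneg ω) _)
          (integrable_gaussianShiftRatio_rpow v a _) (.of_forall fun ω ↦
            one_sub_add_mul_rpow_neg_le hq₀ hq₁ hn (gaussianShiftRatio_pos v a ω))
    _ = exp (q * n * (q * n + 1) / 2 * (a ^ 2 / v)) := by
        rw [integral_gaussianShiftRatio_rpow hv]
        ring_nf
    _ ≤ exp (2 * n * (n + 1) * q ^ 2 * (a ^ 2 / v)) := by
        gcongr
        nlinarith [mul_nonneg (mul_nonneg hq₀ hn) (sub_nonneg.2 hqn)]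

lemma integral_gaussian_mixture_rpow_neg_le_exp_of_le_half (hv : v ≠ 0) (hav : a ^ 2 ≤ v)
    (hq : 0 ≤ q) (hn : 0 ≤ n) (hqn : q * (n + 2) ≤ 1 / 2) :
    ∫ ω, (1 - q + q * gaussianShiftRatio v a ω) ^ (-n) ∂gaussianReal 0 v ≤
      exp (2 * n * (n + 1) * q ^ 2 * (a ^ 2 / v)) := by
  have exp_sub_one_le : exp (a ^ 2 / v) - 1 ≤ 2 * (a ^ 2 / v) := by
    have nonneg : 0 ≤ a ^ 2 / v := by positivity
    have le_one : a ^ 2 / v ≤ 1 := div_le_one_of_le₀ hav v.coe_nonneg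
    simpa [abs_of_nonneg nonneg] using
      (le_abs_self _).trans (abs_exp_sub_one_le (abs_le.2 ⟨by linarith, le_one⟩))
  calc ∫ ω, (1 - q + q * gaussianShiftRatio v a ω) ^ (-n) ∂gaussianReal 0 v
      ≤ 1 + n * (n + 1) * q ^ 2 * (exp (a ^ 2 / v) - 1) := by
        rw [← variance_gaussianShiftRatio hv]
        exact integral_one_sub_add_mul_rpow_neg_le (fun ω ↦ (gaussianShiftRatio_pos v a ω).le)
          (memLp_two_gaussianShiftRatio v a) (integral_gaussianShiftRatio hv a) hq hn hqn
    _ ≤ 1 + n * (n + 1) * q ^ 2 * (2 * (a ^ 2 / v)) := by gcongr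
    _ = 2 * n * (n + 1) * q ^ 2 * (a ^ 2 / v) + 1 := by ring
    _ ≤ exp (2 * n * (n + 1) * q ^ 2 * (a ^ 2 / v)) := add_one_le_exp _

lemma integral_gaussian_mixture_rpow_neg_le_exp (hv : v ≠ 0) (hav : a ^ 2 ≤ v) (hq₀ : 0 ≤ q)
    (hq₁ : q ≤ 1) (hn : 0 ≤ n) :
    ∫ ω, (1 - q + q * gaussianShiftRatio v a ω) ^ (-n) ∂gaussianReal 0 v ≤
      exp (2 * n * (n + 1) * q ^ 2 * (a ^ 2 / v)) := by
  rcases le_total 1 (q * (3 * n + 4)) with hqn | hqn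
  · exact integral_gaussian_mixture_rpow_neg_le_exp_of_one_le hv a hq₀ hq₁ hn hqn
  · exact integral_gaussian_mixture_rpow_neg_le_exp_of_le_half hv hav hq₀ hn
      (by nlinarith [mul_nonneg hq₀ hn])

end Gaussian

lemma gauss1D_eq_gaussianPDFReal (σ ω : ℝ) :
    gauss1D σ ω = gaussianPDFReal 0 (σ ^ 2).toNNReal ω := by
  rw [gauss1D, gaussianPDFReal, coe_toNNReal _ (sq_nonneg σ), sqrt_eq_rpow,
    ← rpow_neg (by positivity)]
  norm_num

theorem sgm_one_dim_renyi_bound_general (q σ α a : ℝ) (hq₀ : 0 ≤ q) (hq₁ : q ≤ 1) (hσ : 0 < σ)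
    (ha : |a| ≤ σ) (hα : 1 < α) :
    (α - 1)⁻¹ * log (∫ ω : ℝ,
        gauss1D σ ω ^ α * ((1 - q) * gauss1D σ ω + q * gauss1D σ (ω - a)) ^ (1 - α)) ≤
      2 * q ^ 2 * α * a ^ 2 / σ ^ 2 := by
  have hα₀ : 0 ≤ α - 1 := (sub_pos.2 hα).le
  have hv : (σ ^ 2).toNNReal ≠ 0 := (toNNReal_pos.2 (by positivity)).ne'
  have hv_coe : ((σ ^ 2).toNNReal : ℝ) = σ ^ 2 := coe_toNNReal _ (sq_nonneg σ)
  have hav : a ^ 2 ≤ (σ ^ 2).toNNReal := by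
    rw [hv_coe]
    exact sq_le_sq.2 (ha.trans (le_abs_self σ))
  have moment_le := integral_gaussian_mixture_rpow_neg_le_exp hv hav hq₀ hq₁ hα₀
  rw [neg_sub, hv_coe] at moment_le
  simp only [gauss1D_eq_gaussianPDFReal, gaussianPDFReal_sub, zero_add]
  rw [integral_gaussian_mixture_eq hv a hq₀ hq₁, inv_mul_le_iff₀ (sub_pos.2 hα)]
  refine log_le_of_nonneg_of_le_exp (integral_nonneg fun ω ↦ rpow_nonneg ?_ _) (by positivity)
    (moment_le.trans_eq ?_)
  · nlinarith [gaussianShiftRatio_pos (σ ^ 2).toNNReal a ω]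
  · ring_nf

/-- One-dimensional Sampled Gaussian Mechanism bound (Mironov et al.): for the mixture
`ν = (1−q)μ₀ + q·Γ₁μ₀` of `μ₀ = N(0,σ²)` with its unit translate, under the stated
conditions on `q`, `σ`, `α`, the Rényi divergence satisfies `D_α(μ₀‖ν) ≤ 2q²α/σ²`. -/
theorem sgm_one_dim_renyi_bound (q σ α A : ℝ)
    (hq0 : 0 < q) (hq : q ≤ 1 / 5) (hσ : 4 ≤ σ)
    (hA : A = Real.log (1 + 1 / (q * (α - 1))))
    (hα1 : 1 < α)
    (hα2 : α ≤ (1 / 2) * σ ^ 2 * A - 2 * Real.log σ)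
    (hα3 : α ≤ ((1 / 2) * σ ^ 2 * A ^ 2 - Real.log 5 - 2 * Real.log σ) /
      (A + Real.log (q * α) + 1 / (2 * σ ^ 2))) :
    (α - 1)⁻¹ * Real.log (∫ ω : ℝ,
        gauss1D σ ω ^ α * ((1 - q) * gauss1D σ ω + q * gauss1D σ (ω - 1)) ^ (1 - α)) ≤
      2 * q ^ 2 * α / σ ^ 2 := by
  simpa using sgm_one_dim_renyi_bound_general q σ α 1 hq0.le (by linarith)
    (by linarith) (by rw [abs_one]; linarith) hα1
end

section
/- Let f₀ be a mixture of centered Gaussian densities f₀(ω) = c₀ Σ_{J: |J|≥L} q^{|J|}(1−q)^{N−|J|} μ(ω; 0, Σ_J) on ℝ^d, where each Σ_J satisfies λ_min(Σ_J) ≥ σ². If f₁ is the corresponding mixture where each component is replaced by ((1−q)·μ(·;0,Σ_J) + q·μ(·−ν;0,Σ_J)) for a fixed shift ν, then E_{ω∼f₀}[(f₀(ω)/f₁(ω))^λ] is bounded above by the corresponding ratio moment for a single isotropic Gaussian: E_{ω∼μ_σ}[(μ_σ(ω)/((1−q)μ_σ + qΓ_ν μ_σ)(ω))^λ], where μ_σ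 = N(0, σ²I). -/
open MeasureTheory Real Finset Matrix

/-- Multivariate Gaussian density on `ℝ^d` with mean `m` and covariance `S`. -/
noncomputable def gaussMat (d : ℕ) (m : Fin d → ℝ) (S : Matrix (Fin d) (Fin d) ℝ)
    (ω : Fin d → ℝ) : ℝ :=
  ((2 * Real.pi) ^ d * S.det) ^ (-(1 : ℝ) / 2) *
    Real.exp (-(1 / 2) * ((ω - m) ⬝ᵥ S⁻¹.mulVec (ω - m)))

/-- Isotropic Gaussian density `N(0, σ²I)` on `ℝ^d`. -/
noncomputable def gaussIso (d : ℕ) (σ : ℝ) (ω : Fin d → ℝ) : ℝ :=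
  (2 * Real.pi * σ ^ 2) ^ (-(d : ℝ) / 2) * Real.exp (-(ω ⬝ᵥ ω) / (2 * σ ^ 2))

open ProbabilityTheory
open scoped ENNReal

/-! The functional `(f, g) ↦ ∫ (f / g) ^ l * f` cannot increase when both densities are convolved
with the same probability measure: by Hölder's inequality
`((∫ F) / ∫ G) ^ l * ∫ F ≤ ∫ (F / G) ^ l * F`, and integrating over all translates gives the claim.
If `S i - T` is positive semidefinite, then `N(m, S i) = N(m, T) ∗ N(0, S i - T)` for every mean
`m`. Hence a single probability measure, the mixture of the `N(0, S i - T)`, convolves `N(0, T)`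
into `f₀` and `(1 - q) N(0, T) + q N(ν, T)` into `f₁`. -/

section RatioMoment

variable {α G : Type*} [MeasurableSpace α] [MeasurableSpace G]

theorem lintegral_div_rpow_mul_lintegral_le {μ : Measure α} {f g : α → ℝ≥0∞}
    (hf : AEMeasurable f μ) (hg : AEMeasurable g μ) (hg0 : ∀ᵐ x ∂μ, g x ≠ 0)
    (hg_top : ∀ᵐ x ∂μ, g x ≠ ∞) {l : ℝ} (hl : 0 ≤ l) :
    ((∫⁻ x, f x ∂μ) / ∫⁻ x, g x ∂μ) ^ l * ∫⁻ x, f x ∂μ ≤ ∫⁻ x, (f x / g x) ^ l * f x ∂μ := by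
  set F := ∫⁻ x, f x ∂μ
  set R := ∫⁻ x, g x ∂μ
  set D := ∫⁻ x, (f x / g x) ^ l * f x ∂μ
  have hl1 : 0 < 1 + l := by linarith
  have factor : ∀ᵐ x ∂μ,
      f x = ((f x / g x) ^ l * f x) ^ (1 / (1 + l)) * g x ^ (l / (1 + l)) := by
    filter_upwards [hg0, hg_top] with x h0 h_top
    calc f x = (f x ^ (1 + l)) ^ (1 / (1 + l)) := by
          rw [← ENNReal.rpow_mul, mul_one_div_cancel hl1.ne', ENNReal.rpow_one]
      _ = ((f x / g x) ^ l * f x * g x ^ l) ^ (1 / (1 + l)) := by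
          rw [mul_right_comm, ← ENNReal.mul_rpow_of_nonneg _ _ hl, ENNReal.div_mul_cancel h0 h_top,
            add_comm, ENNReal.rpow_add_of_nonneg _ _ hl zero_le_one, ENNReal.rpow_one]
      _ = _ := by
          rw [ENNReal.mul_rpow_of_nonneg _ _ (by positivity), ← ENNReal.rpow_mul (g x), mul_one_div]
  have holder : F ≤ D ^ (1 / (1 + l)) * R ^ (l / (1 + l)) :=
    (lintegral_congr_ae factor).trans_le <|
      ENNReal.lintegral_mul_norm_pow_le (((hf.div hg).pow_const l).mul hf) hg (by positivity)
        (by positivity) (by field_simp)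
  have power : F ^ l * F ≤ D * R ^ l :=
    calc F ^ l * F = F ^ (1 + l) := by
          rw [add_comm, ENNReal.rpow_add_of_nonneg _ _ hl zero_le_one, ENNReal.rpow_one]
      _ ≤ (D ^ (1 / (1 + l)) * R ^ (l / (1 + l))) ^ (1 + l) := by gcongr
      _ = D * R ^ l := by
          rw [ENNReal.mul_rpow_of_nonneg _ _ hl1.le, ← ENNReal.rpow_mul, ← ENNReal.rpow_mul,
            one_div_mul_cancel hl1.ne', div_mul_cancel₀ _ hl1.ne', ENNReal.rpow_one]
  calc (F / R) ^ l * F = F ^ l * F / R ^ l := by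
        rw [ENNReal.div_rpow_of_nonneg _ _ hl, ENNReal.mul_div_right_comm]
    _ ≤ D := ENNReal.div_le_of_le_mul power

variable [AddGroup G] [MeasurableAdd₂ G] [MeasurableNeg G] {μ M : Measure G} [SFinite μ]
  [μ.IsAddRightInvariant]

theorem withDensity_conv_eq_withDensity_lintegral [SFinite M] {p : G → ℝ≥0∞}
    (hp : Measurable p) :
    μ.withDensity p ∗ M = μ.withDensity fun ω => ∫⁻ z, p (ω - z) ∂M := by
  refine Measure.ext_of_lintegral _ fun φ hφ => ?_
  calc ∫⁻ ω, φ ω ∂(μ.withDensity p ∗ M)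
      = ∫⁻ x, ∫⁻ z, p x * φ (x + z) ∂M ∂μ := by
        rw [Measure.lintegral_conv hφ, lintegral_withDensity_eq_lintegral_mul _ hp (by fun_prop)]
        exact lintegral_congr fun x => (lintegral_const_mul _ (by fun_prop)).symm
    _ = ∫⁻ z, ∫⁻ x, p x * φ (x + z) ∂μ ∂M := lintegral_lintegral_swap (by fun_prop)
    _ = ∫⁻ z, ∫⁻ ω, p (ω - z) * φ ω ∂μ ∂M := lintegral_congr fun z => by
        rw [← lintegral_sub_right_eq_self _ z]
        simp only [sub_add_cancel]
    _ = ∫⁻ ω, ∫⁻ z, p (ω - z) * φ ω ∂M ∂μ := lintegral_lintegral_swap (by fun_prop)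
    _ = ∫⁻ ω, φ ω ∂μ.withDensity fun ω => ∫⁻ z, p (ω - z) ∂M := by
        rw [lintegral_withDensity_eq_lintegral_mul _ (by fun_prop) hφ]
        exact lintegral_congr fun ω => lintegral_mul_const _ (by fun_prop)

theorem lintegral_div_rpow_mul_conv_le [IsProbabilityMeasure M] {p r : G → ℝ≥0∞}
    (hp : Measurable p) (hr : Measurable r) (hr0 : ∀ ω, r ω ≠ 0) (hr_top : ∀ ω, r ω ≠ ∞)
    {l : ℝ} (hl : 0 ≤ l) :
    ∫⁻ ω, ((∫⁻ z, p (ω - z) ∂M) / ∫⁻ z, r (ω - z) ∂M) ^ l * ∫⁻ z, p (ω - z) ∂M ∂μ ≤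
      ∫⁻ ω, (p ω / r ω) ^ l * p ω ∂μ :=
  calc _ ≤ ∫⁻ ω, ∫⁻ z, (p (ω - z) / r (ω - z)) ^ l * p (ω - z) ∂M ∂μ :=
        lintegral_mono fun ω => lintegral_div_rpow_mul_lintegral_le (by fun_prop) (by fun_prop)
          (ae_of_all _ fun z => hr0 _) (ae_of_all _ fun z => hr_top _) hl
    _ = ∫⁻ _, ∫⁻ ω, (p ω / r ω) ^ l * p ω ∂μ ∂M := by
        rw [lintegral_lintegral_swap (by fun_prop)]
        exact lintegral_congr fun z =>
          lintegral_sub_right_eq_self (fun ω => (p ω / r ω) ^ l * p ω) z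
    _ = ∫⁻ ω, (p ω / r ω) ^ l * p ω ∂μ := by simp

theorem integral_div_rpow_mul_le_of_conv [IsProbabilityMeasure M] {p r f g : G → ℝ}
    (hp : Measurable p) (hp0 : ∀ ω, 0 ≤ p ω) (hr : Measurable r) (hr0 : ∀ ω, 0 < r ω)
    (hf0 : ∀ ω, 0 ≤ f ω) (hg0 : ∀ ω, 0 < g ω)
    (hf : ∀ᵐ ω ∂μ, ENNReal.ofReal (f ω) = ∫⁻ z, ENNReal.ofReal (p (ω - z)) ∂M)
    (hg : ∀ᵐ ω ∂μ, ENNReal.ofReal (g ω) = ∫⁻ z, ENNReal.ofReal (r (ω - z)) ∂M)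
    {l : ℝ} (hl : 0 ≤ l) (hpr : Integrable (fun ω => (p ω / r ω) ^ l * p ω) μ) :
    ∫ ω, (f ω / g ω) ^ l * f ω ∂μ ≤ ∫ ω, (p ω / r ω) ^ l * p ω ∂μ := by
  have nonneg : ∀ {a b : ℝ}, 0 ≤ a → 0 < b → 0 ≤ (a / b) ^ l * a := fun ha hb =>
    mul_nonneg (rpow_nonneg (div_nonneg ha hb.le) l) ha
  have ofReal_ratio : ∀ {a b : ℝ}, 0 ≤ a → 0 < b → ENNReal.ofReal ((a / b) ^ l * a) =
      (ENNReal.ofReal a / ENNReal.ofReal b) ^ l * ENNReal.ofReal a := fun {a b} ha hb => by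
    rw [ENNReal.ofReal_mul (rpow_nonneg (div_nonneg ha hb.le) l), ← ENNReal.ofReal_div_of_pos hb,
      ENNReal.ofReal_rpow_of_nonneg (div_nonneg ha hb.le) hl]
  have le_integral : ∫⁻ ω, ENNReal.ofReal ((f ω / g ω) ^ l * f ω) ∂μ ≤
      ENNReal.ofReal (∫ ω, (p ω / r ω) ^ l * p ω ∂μ) :=
    calc _ = ∫⁻ ω, ((∫⁻ z, ENNReal.ofReal (p (ω - z)) ∂M) /
            ∫⁻ z, ENNReal.ofReal (r (ω - z)) ∂M) ^ l *
              ∫⁻ z, ENNReal.ofReal (p (ω - z)) ∂M ∂μ := by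
          refine lintegral_congr_ae ?_
          filter_upwards [hf, hg] with ω hfω hgω
          rw [ofReal_ratio (hf0 ω) (hg0 ω), hfω, hgω]
      _ ≤ _ := lintegral_div_rpow_mul_conv_le hp.ennreal_ofReal hr.ennreal_ofReal
          (fun ω => (ENNReal.ofReal_pos.mpr (hr0 ω)).ne') (fun _ => ENNReal.ofReal_ne_top) hl
      _ = _ := by
          rw [ofReal_integral_eq_lintegral_ofReal hpr
            (ae_of_all _ fun ω => nonneg (hp0 ω) (hr0 ω))]
          exact lintegral_congr fun ω => (ofReal_ratio (hp0 ω) (hr0 ω)).symm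
  refine (ENNReal.ofReal_le_ofReal_iff
    (integral_nonneg fun ω => nonneg (hp0 ω) (hr0 ω))).mp (le_trans ?_ le_integral)
  calc _ ≤ ‖∫ ω, (f ω / g ω) ^ l * f ω ∂μ‖ₑ := Real.ofReal_le_enorm _
    _ ≤ ∫⁻ ω, ‖(f ω / g ω) ^ l * f ω‖ₑ ∂μ := enorm_integral_le_lintegral_enorm _
    _ = _ := lintegral_congr fun ω => Real.enorm_of_nonneg (nonneg (hf0 ω) (hg0 ω))

end RatioMoment

section StandardGaussian

variable {E : Type*} [NormedAddCommGroup E] [InnerProductSpace ℝ E] [FiniteDimensional ℝ E]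
  [MeasurableSpace E] [BorelSpace E]

theorem integral_stdGaussian_density_mul_cexp (t : E) :
    ∫ x : E, (((2 * π) ^ (-(Module.finrank ℝ E : ℝ) / 2) * rexp (-‖x‖ ^ 2 / 2) : ℝ) : ℂ) *
      Complex.exp (inner ℝ x t * Complex.I) = Complex.exp (-‖t‖ ^ 2 / 2) := by
  have integrand : ∀ x : E,
      (((2 * π) ^ (-(Module.finrank ℝ E : ℝ) / 2) * rexp (-‖x‖ ^ 2 / 2) : ℝ) : ℂ) *
        Complex.exp (inner ℝ x t * Complex.I) =
      ((2 * π) ^ (-(Module.finrank ℝ E : ℝ) / 2) : ℝ) *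
        Complex.exp (-(1 / 2) * ‖x‖ ^ 2 + Complex.I * inner ℝ t x) := fun x => by
    rw [Complex.ofReal_mul, mul_assoc, Complex.ofReal_exp, ← Complex.exp_add, real_inner_comm]
    push_cast
    ring_nf
  have normalization : (((2 * π) ^ (-(Module.finrank ℝ E : ℝ) / 2) : ℝ) : ℂ) *
      (π / (1 / 2)) ^ ((Module.finrank ℝ E : ℂ) / 2) = 1 := by
    rw [show (π / (1 / 2) : ℂ) = ((2 * π : ℝ) : ℂ) by push_cast; ring,
      show (Module.finrank ℝ E / 2 : ℂ) = ((Module.finrank ℝ E / 2 : ℝ) : ℂ) by push_cast; rfl,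
      ← Complex.ofReal_cpow (by positivity), ← Complex.ofReal_mul, ← rpow_add (by positivity),
      neg_div, neg_add_cancel, rpow_zero, Complex.ofReal_one]
  rw [integral_congr_ae (ae_of_all _ integrand), integral_const_mul,
    GaussianFourier.integral_cexp_neg_mul_sq_norm_add (by norm_num), ← mul_assoc, normalization,
    one_mul, Complex.I_sq]
  ring_nf

theorem integrable_stdGaussian_density :
    Integrable fun x : E => (2 * π) ^ (-(Module.finrank ℝ E : ℝ) / 2) * rexp (-‖x‖ ^ 2 / 2) := by
  refine Integrable.const_mul ?_ _
  have h := (GaussianFourier.integrable_cexp_neg_mul_sq_norm_add (V := E) (b := 1 / 2)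
    (by norm_num) 0 0).norm
  refine h.congr (ae_of_all _ fun x => ?_)
  have exponent : -(1 / 2) * (‖x‖ : ℂ) ^ 2 + 0 * inner ℝ 0 x = ((-‖x‖ ^ 2 / 2 : ℝ) : ℂ) := by
    push_cast
    ring
  simp only [exponent, Complex.norm_exp_ofReal]

theorem stdGaussian_eq_withDensity :
    stdGaussian E = volume.withDensity fun x => ENNReal.ofReal
      ((2 * π) ^ (-(Module.finrank ℝ E : ℝ) / 2) * rexp (-‖x‖ ^ 2 / 2)) := by
  have := isFiniteMeasure_withDensity_ofReal (integrable_stdGaussian_density (E := E)).2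
  refine Measure.ext_of_charFun (funext fun t => ?_)
  rw [charFun_stdGaussian, charFun_apply,
    integral_withDensity_eq_integral_toReal_smul (by fun_prop) (by simp),
    ← integral_stdGaussian_density_mul_cexp]
  refine integral_congr_ae (ae_of_all _ fun x => ?_)
  beta_reduce
  rw [ENNReal.toReal_ofReal (by positivity), Complex.real_smul]

end StandardGaussian

section GaussianMeasure

variable {d : ℕ}

@[fun_prop]
theorem measurable_gaussMat (m : Fin d → ℝ) (S : Matrix (Fin d) (Fin d) ℝ) :
    Measurable (gaussMat d m S) := by
  unfold gaussMat
  fun_prop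

theorem gaussMat_add_mulVec {B : Matrix (Fin d) (Fin d) ℝ} (hB : B.det ≠ 0) (m z : Fin d → ℝ) :
    gaussMat d m (B * Bᵀ) (m + B *ᵥ z) =
      |B.det|⁻¹ * ((2 * π) ^ (-(d : ℝ) / 2) * rexp (-(z ⬝ᵥ z) / 2)) := by
  have hB_unit : IsUnit B.det := isUnit_iff_ne_zero.mpr hB
  have quadratic : (B *ᵥ z) ⬝ᵥ (B * Bᵀ)⁻¹ *ᵥ (B *ᵥ z) = z ⬝ᵥ z := by
    rw [mulVec_mulVec, Matrix.mul_inv_rev, Matrix.mul_assoc, nonsing_inv_mul _ hB_unit,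
      Matrix.mul_one, ← transpose_nonsing_inv, mulVec_transpose, dotProduct_comm,
      ← dotProduct_mulVec, mulVec_mulVec, nonsing_inv_mul _ hB_unit, one_mulVec]
  have normalization : ((2 * π) ^ d * (B * Bᵀ).det) ^ (-(1 : ℝ) / 2) =
      |B.det|⁻¹ * (2 * π) ^ (-(d : ℝ) / 2) := by
    rw [det_mul, det_transpose, ← abs_mul_abs_self, ← sq, mul_rpow (by positivity) (by positivity),
      ← rpow_natCast_mul (by positivity), ← rpow_natCast_mul (by positivity), mul_comm,
      ← rpow_neg_one]
    congr 2 <;> push_cast <;> ring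
  rw [gaussMat, add_sub_cancel_left, quadratic, normalization, mul_assoc]
  ring_nf

theorem map_withDensity_comp {α β : Type*} [MeasurableSpace α] [MeasurableSpace β]
    {μ : Measure α} {f : α → β} {g : β → ℝ≥0∞} (hf : Measurable f) (hg : Measurable g) :
    (μ.withDensity (g ∘ f)).map f = (μ.map f).withDensity g := by
  ext s hs
  rw [Measure.map_apply hf hs, withDensity_apply _ (hf hs), withDensity_apply _ hs,
    setLIntegral_map hs hg hf]
  rfl

variable {n : Type*} [Fintype n] [DecidableEq n]

theorem volume_map_add_mulVec {B : Matrix n n ℝ} (hB : B.det ≠ 0) (m : n → ℝ) :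
    (volume : Measure (EuclideanSpace ℝ n)).map (fun x => m + B *ᵥ x.ofLp) =
      ENNReal.ofReal |B.det|⁻¹ • volume := by
  have measurable_toLin : Measurable (toLin' B) :=
    (toLin' B).continuous_of_finiteDimensional.measurable
  calc _ = (((volume : Measure (EuclideanSpace ℝ n)).map WithLp.ofLp).map (toLin' B)).map
        (m + ·) := by
        rw [Measure.map_map measurable_toLin (by fun_prop),
          Measure.map_map (by fun_prop) (by fun_prop)]
        rfl
    _ = ENNReal.ofReal |B.det|⁻¹ • volume := by
        rw [(PiLp.volume_preserving_ofLp n).map_eq,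
          Real.map_matrix_volume_pi_eq_smul_volume_pi hB, Measure.map_smul, map_add_left_eq_self,
          abs_inv]

/-- The Gaussian measure on `n → ℝ` with mean `m` and covariance `S`; unlike `gaussMat` it is
meaningful for singular positive semidefinite `S`. -/
noncomputable def gaussianPi (m : n → ℝ) (S : Matrix n n ℝ) : Measure (n → ℝ) :=
  (multivariateGaussian (WithLp.toLp 2 m) S).map WithLp.ofLp

instance (m : n → ℝ) (S : Matrix n n ℝ) : IsProbabilityMeasure (gaussianPi m S) :=
  Measure.isProbabilityMeasure_map (by fun_prop)

theorem gaussianPi_conv {S T : Matrix n n ℝ} (hS : S.PosSemidef) (hT : T.PosSemidef)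
    (m m' : n → ℝ) : gaussianPi m S ∗ gaussianPi m' T = gaussianPi (m + m') (S + T) := by
  have euclidean : multivariateGaussian (WithLp.toLp 2 m) S ∗
      multivariateGaussian (WithLp.toLp 2 m') T =
        multivariateGaussian (WithLp.toLp 2 (m + m')) (S + T) := by
    refine Measure.ext_of_charFun (funext fun t => ?_)
    rw [charFun_conv, charFun_multivariateGaussian hS, charFun_multivariateGaussian hT,
      charFun_multivariateGaussian (hS.add hT), ← Complex.exp_add, WithLp.toLp_add, inner_add_right,
      add_mulVec, dotProduct_add]
    push_cast
    ring_nf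
  rw [gaussianPi, gaussianPi, gaussianPi, ← euclidean]
  exact (Measure.map_conv_continuousLinearMap
    (PiLp.continuousLinearEquiv 2 ℝ fun _ : n => ℝ).toContinuousLinearMap).symm

open scoped MatrixOrder in
theorem gaussianPi_eq_withDensity {S : Matrix (Fin d) (Fin d) ℝ} (hS : S.PosDef)
    (m : Fin d → ℝ) :
    gaussianPi m S = volume.withDensity fun ω => ENNReal.ofReal (gaussMat d m S ω) := by
  set B := CFC.sqrt S
  have hBB : B * Bᵀ = S := by
    have hB_symm : Bᵀ = B := (CFC.sqrt_nonneg S).posSemidef.isHermitian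
    rw [hB_symm]
    exact CFC.sqrt_mul_sqrt_self S hS.posSemidef.nonneg
  have hB : B.det ≠ 0 := fun h => hS.det_pos.ne' (by rw [← hBB, det_mul, h, zero_mul])
  have std_density : (fun x : EuclideanSpace ℝ (Fin d) => ENNReal.ofReal
      ((2 * π) ^ (-(Module.finrank ℝ (EuclideanSpace ℝ (Fin d)) : ℝ) / 2) * rexp (-‖x‖ ^ 2 / 2))) =
      (fun ω => ENNReal.ofReal |B.det| * ENNReal.ofReal (gaussMat d m S ω)) ∘
        fun x => m + B *ᵥ x.ofLp := by
    funext x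
    rw [Function.comp_apply, ← ENNReal.ofReal_mul (abs_nonneg _), ← hBB, gaussMat_add_mulVec hB,
      mul_inv_cancel_left₀ (abs_ne_zero.mpr hB), finrank_euclideanSpace_fin,
      EuclideanSpace.real_norm_sq_eq]
    simp only [dotProduct, sq]
  rw [gaussianPi, multivariateGaussian, Measure.map_map (by fun_prop) (by fun_prop),
    stdGaussian_eq_withDensity, std_density]
  change Measure.map (fun x : EuclideanSpace ℝ (Fin d) => m + B *ᵥ x.ofLp) _ = _
  rw [map_withDensity_comp (by fun_prop) (by fun_prop), volume_map_add_mulVec hB,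
    withDensity_smul_measure, ← withDensity_smul _ (by fun_prop)]
  congr 1 with ω
  rw [Pi.smul_apply, smul_eq_mul, ← mul_assoc, ← ENNReal.ofReal_mul (by positivity),
    inv_mul_cancel₀ (abs_ne_zero.mpr hB), ENNReal.ofReal_one, one_mul]

end GaussianMeasure

section GaussianDensity

variable {d : ℕ} {S T : Matrix (Fin d) (Fin d) ℝ}

theorem gaussMat_pos (hS : S.PosDef) (m ω : Fin d → ℝ) : 0 < gaussMat d m S ω := by
  have := hS.det_pos
  unfold gaussMat
  positivity

theorem integrable_gaussMat (hS : S.PosDef) (m : Fin d → ℝ) : Integrable (gaussMat d m S) := by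
  refine ⟨by fun_prop, (hasFiniteIntegral_iff_ofReal
    (ae_of_all _ fun ω => (gaussMat_pos hS m ω).le)).mpr ?_⟩
  rw [← setLIntegral_univ, ← withDensity_apply _ .univ, ← gaussianPi_eq_withDensity hS]
  exact measure_lt_top _ _

theorem gaussMat_smul_eq_mul_exp (hS : S.IsSymm) (c : ℝ) (ν ω : Fin d → ℝ) :
    gaussMat d (c • ν) S ω =
      gaussMat d 0 S ω * rexp (c * (ω ⬝ᵥ S⁻¹ *ᵥ ν) - c ^ 2 / 2 * (ν ⬝ᵥ S⁻¹ *ᵥ ν)) := by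
  have symm : ν ⬝ᵥ S⁻¹ *ᵥ ω = ω ⬝ᵥ S⁻¹ *ᵥ ν := by
    rw [dotProduct_mulVec, ← mulVec_transpose, transpose_nonsing_inv, hS.eq, dotProduct_comm]
  rw [gaussMat, gaussMat, mul_assoc, ← Real.exp_add, sub_zero, mulVec_sub, mulVec_smul,
    sub_dotProduct, dotProduct_sub, dotProduct_sub, smul_dotProduct, smul_dotProduct,
    dotProduct_smul, dotProduct_smul, symm]
  simp only [smul_eq_mul]
  ring_nf

theorem integrable_gaussMat_div_rpow_mul (hS : S.PosDef) (ν : Fin d → ℝ) (a : ℝ) :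
    Integrable fun ω => (gaussMat d 0 S ω / gaussMat d ν S ω) ^ a * gaussMat d 0 S ω := by
  have hS_symm : S.IsSymm := hS.isHermitian
  refine ((integrable_gaussMat hS (-a • ν)).const_mul
    (rexp ((a ^ 2 + a) / 2 * (ν ⬝ᵥ S⁻¹ *ᵥ ν)))).congr (ae_of_all _ fun ω => ?_)
  have ratio : gaussMat d 0 S ω / gaussMat d ν S ω =
      rexp (ν ⬝ᵥ S⁻¹ *ᵥ ν / 2 - ω ⬝ᵥ S⁻¹ *ᵥ ν) := by
    rw [← one_smul ℝ ν, gaussMat_smul_eq_mul_exp hS_symm, one_smul,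
      div_mul_cancel_left₀ (gaussMat_pos hS 0 ω).ne', ← Real.exp_neg]
    ring_nf
  beta_reduce
  rw [ratio, gaussMat_smul_eq_mul_exp hS_symm, ← Real.exp_mul, mul_left_comm, ← Real.exp_add,
    mul_comm]
  ring_nf

theorem integrable_gaussMat_div_convexComb_rpow_mul (hS : S.PosDef) (ν : Fin d → ℝ) {q l : ℝ}
    (hq0 : 0 ≤ q) (hq1 : q ≤ 1) (hl : 0 ≤ l) :
    Integrable fun ω => (gaussMat d 0 S ω /
      ((1 - q) * gaussMat d 0 S ω + q * gaussMat d ν S ω)) ^ l * gaussMat d 0 S ω := by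
  refine (integrable_gaussMat_div_rpow_mul hS ν (q * l)).mono'
    (Measurable.aestronglyMeasurable (by fun_prop)) (ae_of_all _ fun ω => ?_)
  have hp := gaussMat_pos hS 0 ω
  have hpν := gaussMat_pos hS ν ω
  set p := gaussMat d 0 S ω
  set pν := gaussMat d ν S ω
  have am_gm : p ^ (1 - q) * pν ^ q ≤ (1 - q) * p + q * pν :=
    geom_mean_le_arith_mean2_weighted (sub_nonneg.mpr hq1) hq0 hp.le hpν.le (by ring)
  have geom_pos : 0 < p ^ (1 - q) * pν ^ q := by positivity
  have hr : 0 < (1 - q) * p + q * pν := geom_pos.trans_le am_gm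
  have ratio_le : p / ((1 - q) * p + q * pν) ≤ (p / pν) ^ q :=
    calc _ ≤ p / (p ^ (1 - q) * pν ^ q) := div_le_div_of_nonneg_left hp.le geom_pos am_gm
      _ = (p / pν) ^ q := by
        rw [rpow_sub hp, rpow_one, div_rpow hp.le hpν.le]
        field_simp
  rw [Real.norm_of_nonneg (by positivity), rpow_mul (by positivity)]
  gcongr

theorem posDef_of_posSemidef_sub {n : Type*} {S T : Matrix n n ℝ} (hT : T.PosDef)
    (hST : (S - T).PosSemidef) : S.PosDef := by
  simpa only [add_sub_cancel] using hT.add_posSemidef hST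

theorem ofReal_gaussMat_ae_eq_lintegral (hT : T.PosDef) (hST : (S - T).PosSemidef)
    (m : Fin d → ℝ) :
    ∀ᵐ ω, ENNReal.ofReal (gaussMat d m S ω) =
      ∫⁻ z, ENNReal.ofReal (gaussMat d m T (ω - z)) ∂gaussianPi 0 (S - T) := by
  have hS := posDef_of_posSemidef_sub hT hST
  refine (withDensity_eq_iff_of_sigmaFinite (by fun_prop) (by fun_prop)).mp ?_
  rw [← withDensity_conv_eq_withDensity_lintegral (p := fun ω => ENNReal.ofReal (gaussMat d m T ω))
      (by fun_prop), ← gaussianPi_eq_withDensity hS,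
    ← gaussianPi_eq_withDensity hT, gaussianPi_conv hT.posSemidef hST, add_zero, add_sub_cancel]

end GaussianDensity

section Mixture

variable {ι n : Type*} [Fintype n] [DecidableEq n] {d : ℕ} {s : Finset ι} {w : ι → ℝ}

/-- The mixture of the centered Gaussian measures with covariances `R i`, with weights `w i`
normalized to total mass one. -/
noncomputable def gaussianMixture (s : Finset ι) (w : ι → ℝ) (R : ι → Matrix n n ℝ) :
    Measure (n → ℝ) :=
  ENNReal.ofReal (∑ i ∈ s, w i)⁻¹ • ∑ i ∈ s, ENNReal.ofReal (w i) • gaussianPi 0 (R i)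

theorem isProbabilityMeasure_gaussianMixture (hw : ∀ i ∈ s, 0 ≤ w i) (hw_sum : 0 < ∑ i ∈ s, w i)
    (R : ι → Matrix n n ℝ) : IsProbabilityMeasure (gaussianMixture s w R) where
  measure_univ := by
    simp only [gaussianMixture, Measure.smul_apply, Measure.coe_finsetSum, Finset.sum_apply,
      measure_univ, smul_eq_mul, mul_one]
    rw [← ENNReal.ofReal_sum_of_nonneg hw, ← ENNReal.ofReal_mul (inv_nonneg.mpr hw_sum.le),
      inv_mul_cancel₀ hw_sum.ne', ENNReal.ofReal_one]

/-- The density of the mixture of the Gaussians with common mean `m` and covariances `S i`, with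
weights `w i` normalized to total mass one. -/
noncomputable def mixtureDensity (s : Finset ι) (w : ι → ℝ) (m : Fin d → ℝ)
    (S : ι → Matrix (Fin d) (Fin d) ℝ) (ω : Fin d → ℝ) : ℝ :=
  (∑ i ∈ s, w i)⁻¹ * ∑ i ∈ s, w i * gaussMat d m (S i) ω

variable {S : ι → Matrix (Fin d) (Fin d) ℝ} {T : Matrix (Fin d) (Fin d) ℝ}

theorem mixtureDensity_pos (hw : ∀ i ∈ s, 0 ≤ w i) (hw_sum : 0 < ∑ i ∈ s, w i)
    (hS : ∀ i ∈ s, (S i).PosDef) (m ω : Fin d → ℝ) : 0 < mixtureDensity s w m S ω := by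
  obtain ⟨i, hi, hwi⟩ := (sum_pos_iff_of_nonneg hw).mp hw_sum
  exact mul_pos (inv_pos.mpr hw_sum) <|
    sum_pos' (fun j hj => mul_nonneg (hw j hj) (gaussMat_pos (hS j hj) m ω).le)
      ⟨i, hi, mul_pos hwi (gaussMat_pos (hS i hi) m ω)⟩

theorem ofReal_mixtureDensity_ae_eq_lintegral (hw : ∀ i ∈ s, 0 ≤ w i) (hT : T.PosDef)
    (hST : ∀ i ∈ s, (S i - T).PosSemidef) (m : Fin d → ℝ) :
    ∀ᵐ ω, ENNReal.ofReal (mixtureDensity s w m S ω) =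
      ∫⁻ z, ENNReal.ofReal (gaussMat d m T (ω - z)) ∂gaussianMixture s w fun i => S i - T := by
  have component : ∀ᵐ ω, ∀ i ∈ s, ENNReal.ofReal (gaussMat d m (S i) ω) =
      ∫⁻ z, ENNReal.ofReal (gaussMat d m T (ω - z)) ∂gaussianPi 0 (S i - T) :=
    (ae_ball_iff s.countable_toSet).mpr fun i hi => ofReal_gaussMat_ae_eq_lintegral hT (hST i hi) m
  have summand_nonneg : ∀ ω, ∀ i ∈ s, 0 ≤ w i * gaussMat d m (S i) ω := fun ω i hi =>
    mul_nonneg (hw i hi) (gaussMat_pos (posDef_of_posSemidef_sub hT (hST i hi)) m ω).le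
  filter_upwards [component] with ω hω
  rw [mixtureDensity, gaussianMixture, lintegral_smul_measure, lintegral_finsetSum_measure,
    ENNReal.ofReal_mul (inv_nonneg.mpr (sum_nonneg hw)),
    ENNReal.ofReal_sum_of_nonneg (summand_nonneg ω), smul_eq_mul]
  congr 1
  exact sum_congr rfl fun i hi => by
    rw [ENNReal.ofReal_mul (hw i hi), hω i hi, lintegral_smul_measure, smul_eq_mul]

theorem convexComb_pos {q a b : ℝ} (hq0 : 0 ≤ q) (hq1 : q ≤ 1) (ha : 0 < a) (hb : 0 < b) :
    0 < (1 - q) * a + q * b :=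
  convex_Ioi (0 : ℝ) ha hb (sub_nonneg.mpr hq1) hq0 (sub_add_cancel 1 q)

theorem ofReal_convexComb {q a b : ℝ} (hq0 : 0 ≤ q) (hq1 : q ≤ 1) (ha : 0 ≤ a) (hb : 0 ≤ b) :
    ENNReal.ofReal ((1 - q) * a + q * b) =
      ENNReal.ofReal (1 - q) * ENNReal.ofReal a + ENNReal.ofReal q * ENNReal.ofReal b := by
  have hq1' := sub_nonneg.mpr hq1
  rw [ENNReal.ofReal_add (by positivity) (by positivity), ENNReal.ofReal_mul hq1',
    ENNReal.ofReal_mul hq0]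

theorem mixture_ratio_moment_reduction_general (hw : ∀ i ∈ s, 0 ≤ w i)
    (hw_sum : 0 < ∑ i ∈ s, w i) (hT : T.PosDef) (hST : ∀ i ∈ s, (S i - T).PosSemidef)
    (ν : Fin d → ℝ) {q l : ℝ} (hq0 : 0 ≤ q) (hq1 : q ≤ 1) (hl : 0 ≤ l) :
    letI c₀ := (∑ i ∈ s, w i)⁻¹
    letI f₀ := fun ω => c₀ * ∑ i ∈ s, w i * gaussMat d 0 (S i) ω
    letI f₁ := fun ω =>
      c₀ * ∑ i ∈ s, w i * ((1 - q) * gaussMat d 0 (S i) ω + q * gaussMat d ν (S i) ω)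
    ∫ ω, (f₀ ω / f₁ ω) ^ l * f₀ ω ≤
      ∫ ω, (gaussMat d 0 T ω / ((1 - q) * gaussMat d 0 T ω + q * gaussMat d ν T ω)) ^ l *
        gaussMat d 0 T ω := by
  have := isProbabilityMeasure_gaussianMixture hw hw_sum fun i => S i - T
  have pos := gaussMat_pos hT
  have mixture_pos := mixtureDensity_pos hw hw_sum fun i hi =>
    posDef_of_posSemidef_sub hT (hST i hi)
  have mixture_eq := ofReal_mixtureDensity_ae_eq_lintegral hw hT hST
  have shifted_mixture : ∀ ω, (∑ i ∈ s, w i)⁻¹ * ∑ i ∈ s, w i *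
      ((1 - q) * gaussMat d 0 (S i) ω + q * gaussMat d ν (S i) ω) =
      (1 - q) * mixtureDensity s w 0 S ω + q * mixtureDensity s w ν S ω := fun ω => by
    simp only [mixtureDensity, mul_sum, ← sum_add_distrib]
    exact sum_congr rfl fun i _ => by ring
  simp only [shifted_mixture]
  refine integral_div_rpow_mul_le_of_conv (M := gaussianMixture s w fun i => S i - T)
    (by fun_prop) (fun ω => (pos 0 ω).le) (by fun_prop)
    (fun ω => convexComb_pos hq0 hq1 (pos 0 ω) (pos ν ω)) (fun ω => (mixture_pos 0 ω).le)
    (fun ω => convexComb_pos hq0 hq1 (mixture_pos 0 ω) (mixture_pos ν ω)) (mixture_eq 0) ?_ hl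
    (integrable_gaussMat_div_convexComb_rpow_mul hT ν hq0 hq1 hl)
  filter_upwards [mixture_eq 0, mixture_eq ν] with ω h0 hν
  simp only [ofReal_convexComb hq0 hq1 (pos 0 _).le (pos ν _).le]
  rw [ofReal_convexComb hq0 hq1 (mixture_pos 0 ω).le (mixture_pos ν ω).le, h0, hν,
    lintegral_add_left (by fun_prop), lintegral_const_mul _ (by fun_prop),
    lintegral_const_mul _ (by fun_prop)]

end Mixture

theorem gaussIso_sub {d : ℕ} {σ : ℝ} (hσ : 0 < σ) (ν ω : Fin d → ℝ) :
    gaussIso d σ (ω - ν) = gaussMat d ν (σ ^ 2 • 1) ω := by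
  have inv_cov : (σ ^ 2 • (1 : Matrix (Fin d) (Fin d) ℝ))⁻¹ = (σ ^ 2)⁻¹ • 1 :=
    inv_eq_left_inv <| by
      rw [smul_mul_smul_comm, inv_mul_cancel₀ (by positivity), Matrix.one_mul, one_smul]
  rw [gaussIso, gaussMat, inv_cov, det_smul, det_one, mul_one, Fintype.card_fin, ← mul_pow,
    ← rpow_natCast_mul (by positivity), smul_mulVec, one_mulVec, dotProduct_smul, smul_eq_mul]
  congr 2
  · ring
  · field_simp

theorem gaussIso_eq_gaussMat {d : ℕ} {σ : ℝ} (hσ : 0 < σ) :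
    gaussIso d σ = gaussMat d 0 (σ ^ 2 • 1) :=
  funext fun ω => by rw [← gaussIso_sub hσ, sub_zero]

theorem sum_pow_card_mul_pow_pos {α : Type*} [Fintype α] {L : ℕ} (hL : L ≤ Fintype.card α) {q : ℝ}
    (hq0 : 0 < q) (hq1 : q ≤ 1) :
    0 < ∑ J : Finset α with L ≤ #J, q ^ #J * (1 - q) ^ (Fintype.card α - #J) := by
  have := sub_nonneg.mpr hq1
  refine sum_pos' (fun J _ => by positivity) ⟨univ, by simpa using hL, ?_⟩
  rw [card_univ, Nat.sub_self, pow_zero, mul_one]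
  positivity

/-- Reduction to the worst-case isotropic Gaussian: for a mixture `f₀` of centered
Gaussians with component covariances `Σ_J` satisfying `λ_min(Σ_J) ≥ σ²` and the
corresponding shifted mixture `f₁`, the `λ`-th ratio moment `E_{ω∼f₀}[(f₀/f₁)^λ]` is
bounded by the corresponding moment for a single isotropic Gaussian `N(0, σ²I)` against
its `q`-mixture with the `ν`-translate. -/
theorem mixture_ratio_moment_reduction {d N : ℕ} (L : ℕ) (hLN : L ≤ N)
    (SigJ : Finset (Fin N) → Matrix (Fin d) (Fin d) ℝ)
    (σ q lam : ℝ) (ν : Fin d → ℝ)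
    (hσ : 0 < σ) (hq0 : 0 < q) (hq1 : q ≤ 1) (hlam : 1 ≤ lam)
    (hν : ν ⬝ᵥ ν ≤ 1)
    (hPD : ∀ J : Finset (Fin N), L ≤ J.card → (SigJ J).PosDef)
    (hmin : ∀ J : Finset (Fin N), L ≤ J.card →
      (SigJ J - σ ^ 2 • (1 : Matrix (Fin d) (Fin d) ℝ)).PosSemidef) :
    letI SS := (Finset.univ : Finset (Finset (Fin N))).filter (fun J => L ≤ J.card)
    letI c₀ := (∑ J ∈ SS, q ^ J.card * (1 - q) ^ (N - J.card))⁻¹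
    letI f₀ := fun ω : Fin d → ℝ =>
      c₀ * ∑ J ∈ SS, q ^ J.card * (1 - q) ^ (N - J.card) * gaussMat d 0 (SigJ J) ω
    letI f₁ := fun ω : Fin d → ℝ =>
      c₀ * ∑ J ∈ SS, q ^ J.card * (1 - q) ^ (N - J.card) *
        ((1 - q) * gaussMat d 0 (SigJ J) ω + q * gaussMat d ν (SigJ J) ω)
    ∫ ω : Fin d → ℝ, (f₀ ω / f₁ ω) ^ lam * f₀ ω ≤
      ∫ ω : Fin d → ℝ,
        (gaussIso d σ ω / ((1 - q) * gaussIso d σ ω + q * gaussIso d σ (ω - ν))) ^ lam *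
          gaussIso d σ ω := by
  have := sub_nonneg.mpr hq1
  simpa only [gaussIso_sub hσ, gaussIso_eq_gaussMat hσ] using
    mixture_ratio_moment_reduction_general (S := SigJ) (fun J _ => by positivity)
      (by simpa using sum_pow_card_mul_pow_pos (α := Fin N) (by simpa using hLN) hq0 hq1)
      (PosDef.one.smul (by positivity)) (fun J hJ => hmin J (mem_filter.mp hJ).2) ν hq0.le hq1
      (zero_le_one.trans hlam)
end
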